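/- Let V ⊆ [0,1] be closed in the standard topology of ℝ with 0 ∈ V and 1 ∈ V, and suppose every accumulation point of V (in ℝ) lies in {0}. Then V equipped with the metric d_max is a compact metric space. -/

import Mathlib

open Set Filter

/-- `d_max(x,y) = 0` if `x = y`, and `max x y` otherwise. -/
noncomputable def dmax (x y : ℝ) : ℝ := if x = y then 0 else max x y

/-!
The identity from `V` with its Euclidean topology to `V` with the metric `d_max` is continuous: a
nonzero point of `V` is isolated, and at `0` the two distances agree because `d_max(y, 0) = y`. So
`(V, d_max)` is a continuous image of a compact space.
-/

open Topology

theorem dmax_self (x : ℝ) : dmax x x = 0 := if_pos rfl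

theorem dmax_of_ne {x y : ℝ} (h : x ≠ y) : dmax x y = max x y := if_neg h

theorem dmax_comm (x y : ℝ) : dmax x y = dmax y x := by
  simp only [dmax, eq_comm, max_comm]

theorem dmax_zero_right {x : ℝ} (hx : 0 ≤ x) : dmax x 0 = x := by
  rcases hx.eq_or_lt with rfl | hpos
  · exact dmax_self 0
  · rw [dmax_of_ne hpos.ne', max_eq_left hx]

theorem eq_of_dmax_eq_zero {x y : ℝ} (hx : 0 ≤ x) (hy : 0 ≤ y) (h : dmax x y = 0) : x = y := by
  by_contra hne
  rw [dmax_of_ne hne] at h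
  have hx0 : x = 0 := le_antisymm (h ▸ le_max_left x y) hx
  have hy0 : y = 0 := le_antisymm (h ▸ le_max_right x y) hy
  exact hne (hx0.trans hy0.symm)

theorem dmax_triangle (x z : ℝ) {y : ℝ} (hy : 0 ≤ y) : dmax x z ≤ dmax x y + dmax y z := by
  rcases eq_or_ne x y with rfl | hxy
  · rw [dmax_self, zero_add]
  rcases eq_or_ne y z with rfl | hyz
  · rw [dmax_self, add_zero]
  have hxy_nonneg : 0 ≤ max x y := le_max_of_le_right hy
  have hyz_nonneg : 0 ≤ max y z := le_max_of_le_left hy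
  rw [dmax_of_ne hxy, dmax_of_ne hyz]
  rcases eq_or_ne x z with rfl | hxz
  · rw [dmax_self]
    exact add_nonneg hxy_nonneg hyz_nonneg
  · rw [dmax_of_ne hxz]
    exact max_le (le_add_of_le_of_nonneg (le_max_left x y) hyz_nonneg)
      (le_add_of_nonneg_of_le hxy_nonneg (le_max_right y z))

theorem tendsto_dmax_nhdsWithin_of_not_accPt {V : Set ℝ} {x : ℝ} (hx : ¬AccPt x (𝓟 V)) :
    Tendsto (dmax · x) (𝓝[V] x) (𝓝 0) := by
  have hcont : ContinuousWithinAt (dmax · x) V x := continuousWithinAt_of_not_accPt hx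
  simpa only [ContinuousWithinAt, dmax_self] using hcont

theorem tendsto_dmax_zero_nhdsGE : Tendsto (dmax · 0) (𝓝[≥] 0) (𝓝 0) := by
  refine (tendsto_id.mono_left nhdsWithin_le_nhds).congr' ?_
  filter_upwards [self_mem_nhdsWithin] with y hy
  exact (dmax_zero_right hy).symm

/-- The metric `d_max` on a set of nonnegative reals. It is a reducible definition rather than an
instance, because a subset of `ℝ` already carries its Euclidean metric. -/
noncomputable abbrev dmaxMetricSpace (V : Set ℝ) (hV : V ⊆ Ici 0) : MetricSpace V where
  dist a b := dmax a b
  dist_self a := dmax_self a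
  dist_comm a b := dmax_comm a b
  dist_triangle a b c := dmax_triangle a c (hV b.2)
  eq_of_dist_eq_zero {a b} h := Subtype.ext (eq_of_dmax_eq_zero (hV a.2) (hV b.2) h)

theorem continuous_id_dmaxMetricSpace {V : Set ℝ} (hV : V ⊆ Ici 0)
    (hacc : ∀ x : ℝ, AccPt x (𝓟 V) → x = 0) :
    Continuous[instTopologicalSpaceSubtype,
      (dmaxMetricSpace V hV).toUniformSpace.toTopologicalSpace] (id : V → V) := by
  refine (@continuous_iff_continuousAt V V _
    (dmaxMetricSpace V hV).toUniformSpace.toTopologicalSpace id).2 fun x ↦ ?_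
  refine (@tendsto_iff_dist_tendsto_zero V V
    (dmaxMetricSpace V hV).toPseudoMetricSpace id (𝓝 x) x).2 ?_
  suffices Tendsto (dmax · x) (𝓝[V] x) (𝓝 0) from
    (tendsto_nhdsWithin_iff_subtype x.2 _ _).1 this
  by_cases hx : AccPt (x : ℝ) (𝓟 V)
  · rw [hacc x hx]
    exact tendsto_dmax_zero_nhdsGE.mono_left (nhdsWithin_mono 0 hV)
  · exact tendsto_dmax_nhdsWithin_of_not_accPt hx

theorem goedel_set_dmax_compact_general (V : Set ℝ) (hV : V ⊆ Ici 0) (hcpt : IsCompact V)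
    (hacc : ∀ x : ℝ, AccPt x (𝓟 V) → x = 0) :
    ∃ m : MetricSpace V,
      (∀ a b : V, m.dist a b = dmax (a : ℝ) (b : ℝ)) ∧
      @CompactSpace V m.toUniformSpace.toTopologicalSpace := by
  have : CompactSpace V := isCompact_iff_compactSpace.1 hcpt
  exact ⟨dmaxMetricSpace V hV, fun _ _ ↦ rfl,
    @Function.Surjective.compactSpace V V _ (_) id (continuous_id_dmaxMetricSpace hV hacc) _
      Function.surjective_id⟩

/-- A Gödel set all of whose accumulation points lie in `{0}` is, with the
metric `d_max`, a compact metric space. -/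
theorem goedel_set_dmax_compact (V : Set ℝ) (hV : V ⊆ Icc 0 1)
    (hcl : IsClosed V) (h0 : (0:ℝ) ∈ V) (h1 : (1:ℝ) ∈ V)
    (hacc : ∀ x : ℝ, AccPt x (𝓟 V) → x = 0) :
    ∃ m : MetricSpace V,
      (∀ a b : V, m.dist a b = dmax (a : ℝ) (b : ℝ)) ∧
      @CompactSpace V m.toUniformSpace.toTopologicalSpace :=
  goedel_set_dmax_compact_general V (hV.trans Icc_subset_Ici_self)
    (isCompact_Icc.of_isClosed_subset hcl hV) hacc
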